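/- arXiv:math/0606212 — 5 statements merged into one kernel-verified Lean document; each statement's English description precedes it below -/
import Mathlib

section
/- Every orbit of the group of bijections of ℤ^n(s) generated by σ_0, σ_1, …, σ_{n−1} contains exactly one element of A_{n,l}(s); that is, A_{n,l}(s) is a fundamental domain for this action. -/
/-- The bijection `σ_i` of `ℤ^n(s)` (entries 0-indexed): `σ_0` sends `(s_1,…,s_n)` to
`(s_n + c, s_2, …, s_{n−1}, s_1 − c)`, and for `1 ≤ i ≤ n−1`, `σ_i` swaps the `i`-th
and `(i+1)`-th entries.  Here `c` is the shift (equal to `l` in the application). -/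
def sigmaMove (d : ℕ) (c : ℤ) (i : Fin d) (v : Fin d → ℤ) : Fin d → ℤ := fun j =>
  if i.val = 0 then
    (if j.val = 0 then v ⟨d - 1, by have := j.isLt; omega⟩ + c
     else if j.val = d - 1 then v ⟨0, by have := j.isLt; omega⟩ - c
     else v j)
  else
    (if j.val + 1 = i.val then v i
     else if j.val = i.val then v ⟨i.val - 1, by have := i.isLt; omega⟩
     else v j)

/-!
The moves are reflections of `ℤ^n` in the hyperplanes `x_p - x_q = e` bounding the alcove of
antitone vectors whose entries differ by at most `l`.

*Existence.* The point with coordinates `-j / n` (`0 ≤ j < n`) lies strictly inside all the walls,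
so reflecting a vector in a wall that separates it from this point strictly decreases its distance
to the point. Repeating this leads into the alcove after finitely many moves, the distances being
discrete.

*Uniqueness.* For every `t`, the sum `∑ ⌊(x_i - t) / l⌋` is constant on orbits. If `x` and `y` lie
in the alcove and `y_j < x_j =: t`, then `⌊(y_i - t) / l⌋ ≤ ⌊(x_i - t) / l⌋` for all `i`, strictly
for `i = j`: for `i < j` the number `0` lies between the two sides, for `i > j` the number `-1`
does. So the invariants at `t` separate `x` from `y`.
-/

section AffineReflection

variable {ι R : Type*} [DecidableEq ι] [CommRing R]

/-- The reflection in the affine hyperplane `x p - x q = e` (for `p ≠ q`): it exchanges the entries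
at `p` and `q` up to the shift `e` and fixes all others. Every `σ_i` is of this form. -/
def affineReflection (p q : ι) (e : R) (v : ι → R) : ι → R :=
  v - (v p - v q - e) • (Pi.single p 1 - Pi.single q 1)

variable {p q : ι}

lemma affineReflection_apply_left (hpq : p ≠ q) (e : R) (v : ι → R) :
    affineReflection p q e v p = v q + e := by
  simp only [affineReflection, Pi.sub_apply, Pi.smul_apply, Pi.single_eq_same,
    Pi.single_eq_of_ne hpq, smul_eq_mul]
  ring

lemma affineReflection_apply_right (hpq : p ≠ q) (e : R) (v : ι → R) :
    affineReflection p q e v q = v p - e := by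
  simp only [affineReflection, Pi.sub_apply, Pi.smul_apply, Pi.single_eq_same,
    Pi.single_eq_of_ne hpq.symm, smul_eq_mul]
  ring

lemma affineReflection_apply_of_ne {j : ι} (hp : j ≠ p) (hq : j ≠ q) (e : R) (v : ι → R) :
    affineReflection p q e v j = v j := by
  simp [affineReflection, hp, hq]

variable [Fintype ι]

lemma sum_affineReflection {M : Type*} [AddCommGroup M] (hpq : p ≠ q) (e : R) (v : ι → R)
    (F : ι → R → M) :
    ∑ j, F j (affineReflection p q e v j) =
      ∑ j, F j (v j) + ((F p (v q + e) - F p (v p)) + (F q (v p - e) - F q (v q))) := by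
  rw [← sub_eq_iff_eq_add', ← Finset.sum_sub_distrib, Fintype.sum_eq_add p q hpq,
    affineReflection_apply_left hpq, affineReflection_apply_right hpq]
  rintro j ⟨hp, hq⟩
  rw [affineReflection_apply_of_ne hp hq, sub_self]

lemma sum_affineReflection_of_map_add {M : Type*} [AddCommGroup M] (hpq : p ≠ q) {e : R}
    {φ : R → M} {d : M} (hφ : ∀ x, φ (x + e) = φ x + d) (v : ι → R) :
    ∑ j, φ (affineReflection p q e v j) = ∑ j, φ (v j) := by
  have hsub : φ (v p) = φ (v p - e) + d := by rw [← hφ, sub_add_cancel]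
  rw [sum_affineReflection hpq e v fun _ => φ, hφ, hsub]
  abel

lemma sum_sq_affineReflection (hpq : p ≠ q) (e a : R) (b v : ι → R) :
    ∑ j, (a * affineReflection p q e v j + b j) ^ 2 =
      ∑ j, (a * v j + b j) ^ 2 - 2 * a * (v p - v q - e) * (a * e + b p - b q) := by
  rw [sum_affineReflection hpq e v fun j x => (a * x + b j) ^ 2]
  ring

end AffineReflection

section SigmaMove

variable {m : ℕ}

lemma sigmaMove_zero (c : ℤ) (v : Fin (m + 2) → ℤ) :
    sigmaMove (m + 2) c 0 v = affineReflection 0 (Fin.last (m + 1)) c v := by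
  have hne : (0 : Fin (m + 2)) ≠ Fin.last (m + 1) := Fin.last_pos.ne
  funext j
  rcases eq_or_ne j 0 with rfl | h0
  · rw [affineReflection_apply_left hne]
    simp [sigmaMove, Fin.last]
  rcases eq_or_ne j (Fin.last (m + 1)) with rfl | h1
  · rw [affineReflection_apply_right hne]
    simp [sigmaMove]
  · have hfirst : (j : ℕ) ≠ 0 := Fin.val_ne_of_ne h0
    have hlast : (j : ℕ) ≠ m + 1 := Fin.val_ne_of_ne h1
    rw [affineReflection_apply_of_ne h0 h1]
    simp [sigmaMove, hfirst, hlast]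

lemma sigmaMove_succ (c : ℤ) (i : Fin m) (v : Fin (m + 1) → ℤ) :
    sigmaMove (m + 1) c i.succ v = affineReflection i.castSucc i.succ 0 v := by
  have hne : i.castSucc ≠ i.succ := Fin.castSucc_lt_succ.ne
  funext j
  rcases eq_or_ne j i.castSucc with rfl | h0
  · rw [affineReflection_apply_left hne]
    simp [sigmaMove]
  rcases eq_or_ne j i.succ with rfl | h1
  · rw [affineReflection_apply_right hne]
    simp [sigmaMove, Fin.castSucc, Fin.castAdd, Fin.castLE]
  · have hleft : (j : ℕ) ≠ i := Fin.val_ne_of_ne h0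
    have hright : (j : ℕ) ≠ i + 1 := Fin.val_ne_of_ne h1
    rw [affineReflection_apply_of_ne h0 h1]
    simp [sigmaMove, hleft, hright]

lemma sum_sigmaMove {M : Type*} [AddCommGroup M] {c : ℤ} {φ : ℤ → M} {d : M}
    (hφ : ∀ x, φ (x + c) = φ x + d) (i : Fin (m + 2)) (v : Fin (m + 2) → ℤ) :
    ∑ j, φ (sigmaMove (m + 2) c i v j) = ∑ j, φ (v j) := by
  cases i using Fin.cases with
  | zero =>
    rw [sigmaMove_zero]
    exact sum_affineReflection_of_map_add Fin.last_pos.ne hφ v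
  | succ i =>
    rw [sigmaMove_succ]
    exact sum_affineReflection_of_map_add (d := 0) Fin.castSucc_lt_succ.ne (by simp) v

end SigmaMove

section Orbit

/-- The relation of lying in the same orbit of the group generated by the moves `σ_i` with
shift `c`. -/
def SameOrbit {n : ℕ} (c : ℤ) : (Fin n → ℤ) → (Fin n → ℤ) → Prop :=
  Relation.EqvGen fun x y => ∃ i : Fin n, y = sigmaMove n c i x

variable {m : ℕ} {c : ℤ} {v w : Fin (m + 2) → ℤ}

lemma SameOrbit.sum_comp_eq {M : Type*} [AddCommGroup M] {φ : ℤ → M} {d : M}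
    (hφ : ∀ x, φ (x + c) = φ x + d) (h : SameOrbit c v w) :
    ∑ j, φ (v j) = ∑ j, φ (w j) := by
  induction h with
  | rel x y h =>
    obtain ⟨i, rfl⟩ := h
    exact (sum_sigmaMove hφ i x).symm
  | refl x => rfl
  | symm x y _ ih => exact ih.symm
  | trans x y z _ _ ihxy ihyz => exact ihxy.trans ihyz

lemma SameOrbit.sum_eq (h : SameOrbit c v w) : ∑ j, v j = ∑ j, w j :=
  h.sum_comp_eq (φ := id) fun _ => rfl

lemma SameOrbit.sum_ediv_eq (hc : c ≠ 0) (h : SameOrbit c v w) (t : ℤ) :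
    ∑ j, (v j - t) / c = ∑ j, (w j - t) / c :=
  h.sum_comp_eq (φ := fun x => (x - t) / c) (d := 1) fun x => by
    rw [add_sub_right_comm, Int.add_ediv_of_dvd_right dvd_rfl, Int.ediv_self hc]

end Orbit

/-- The closed alcove of antitone vectors whose entries differ by at most `c`. Its vectors of
coordinate sum `s` are the elements of `A_{n,c}(s)`. -/
def alcove (ι : Type*) [Preorder ι] (c : ℤ) : Set (ι → ℤ) :=
  {v | Antitone v ∧ ∀ i j, v i - v j ≤ c}

lemma mem_alcove_fin {m : ℕ} {c : ℤ} {v : Fin (m + 1) → ℤ} :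
    v ∈ alcove (Fin (m + 1)) c ↔ Antitone v ∧ v 0 - v (Fin.last m) ≤ c :=
  and_congr_right fun hv =>
    ⟨fun h => h 0 (Fin.last m),
      fun h i j => (sub_le_sub (hv (Fin.zero_le i)) (hv (Fin.le_last j))).trans h⟩

section Uniqueness

variable {ι : Type*} [LinearOrder ι] {c : ℤ} {x y : ι → ℤ}

lemma ediv_le_ediv_of_mem_alcove (hc : 0 < c) (hx : x ∈ alcove ι c) (hy : y ∈ alcove ι c) {j : ι}
    (hj : y j < x j) (i : ι) : (y i - x j) / c ≤ (x i - x j) / c := by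
  rcases le_total i j with hij | hji
  · have hyi : (y i - x j) / c < 1 := Int.ediv_lt_of_lt_mul hc (by linarith [hy.2 i j])
    have hxi : 0 ≤ (x i - x j) / c := Int.ediv_nonneg (sub_nonneg.2 (hx.1 hij)) hc.le
    lia
  · have hyi : (y i - x j) / c < 0 := Int.ediv_neg_of_neg_of_pos (by linarith [hy.1 hji]) hc
    have hxi : -1 ≤ (x i - x j) / c := Int.le_ediv_of_mul_le hc (by linarith [hx.2 j i])
    lia

variable [Fintype ι]

lemma le_of_sum_ediv_le (hc : 0 < c) (hx : x ∈ alcove ι c) (hy : y ∈ alcove ι c)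
    (h : ∀ t, ∑ i, (x i - t) / c ≤ ∑ i, (y i - t) / c) : x ≤ y := by
  intro j
  by_contra! hj
  have hlt : (y j - x j) / c < (x j - x j) / c := by
    rw [sub_self, Int.zero_ediv]
    exact Int.ediv_neg_of_neg_of_pos (sub_neg.2 hj) hc
  exact (h (x j)).not_gt <| Finset.sum_lt_sum
    (fun i _ => ediv_le_ediv_of_mem_alcove hc hx hy hj i) ⟨j, Finset.mem_univ j, hlt⟩

end Uniqueness

lemma SameOrbit.eq_of_mem_alcove {m : ℕ} {c : ℤ} (hc : 0 < c) {x y : Fin (m + 2) → ℤ}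
    (h : SameOrbit c x y) (hx : x ∈ alcove _ c) (hy : y ∈ alcove _ c) : x = y :=
  le_antisymm (le_of_sum_ediv_le hc hx hy fun t => (h.sum_ediv_eq hc.ne' t).le)
    (le_of_sum_ediv_le hc hy hx fun t => (h.sum_ediv_eq hc.ne' t).ge)

section Existence

/-- `n²` times the squared Euclidean distance from `v` to the point with coordinates `-j / n`
(`0 ≤ j < n`), which lies strictly inside every wall of the alcove of width `c ≥ 1`. -/
def alcoveSqDist {n : ℕ} (v : Fin n → ℤ) : ℤ := ∑ j : Fin n, (n * v j + (j : ℤ)) ^ 2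

lemma alcoveSqDist_nonneg {n : ℕ} (v : Fin n → ℤ) : 0 ≤ alcoveSqDist v :=
  Finset.sum_nonneg fun _ _ => sq_nonneg _

variable {m : ℕ}

lemma alcoveSqDist_sigmaMove_succ (c : ℤ) (i : Fin m) (v : Fin (m + 1) → ℤ) :
    alcoveSqDist (sigmaMove (m + 1) c i.succ v) =
      alcoveSqDist v - 2 * (m + 1) * (v i.succ - v i.castSucc) := by
  rw [sigmaMove_succ, alcoveSqDist, sum_sq_affineReflection Fin.castSucc_lt_succ.ne, alcoveSqDist]
  simp only [Fin.val_castSucc, Fin.val_succ]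
  push_cast
  ring

lemma alcoveSqDist_sigmaMove_zero (c : ℤ) (v : Fin (m + 2) → ℤ) :
    alcoveSqDist (sigmaMove (m + 2) c 0 v) =
      alcoveSqDist v -
        2 * (m + 2) * (v 0 - v (Fin.last (m + 1)) - c) * ((m + 2) * c - (m + 1)) := by
  rw [sigmaMove_zero, alcoveSqDist, sum_sq_affineReflection Fin.last_pos.ne, alcoveSqDist]
  simp only [Fin.val_zero, Fin.val_last]
  push_cast
  ring

lemma exists_alcoveSqDist_sigmaMove_lt {c : ℤ} (hc : 0 < c) {v : Fin (m + 2) → ℤ}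
    (hv : v ∉ alcove _ c) : ∃ i, alcoveSqDist (sigmaMove (m + 2) c i v) < alcoveSqDist v := by
  by_cases hanti : Antitone v
  · have hwidth : 0 < v 0 - v (Fin.last (m + 1)) - c := by
      by_contra! hle
      exact hv (mem_alcove_fin.2 ⟨hanti, sub_nonpos.1 hle⟩)
    have hcenter : 0 < (m + 2) * c - (m + 1) := by nlinarith
    refine ⟨0, ?_⟩
    rw [alcoveSqDist_sigmaMove_zero]
    exact sub_lt_self _ (by positivity)
  · obtain ⟨i, hi⟩ : ∃ i : Fin (m + 1), v i.castSucc < v i.succ := by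
      simpa only [Fin.antitone_iff_succ_le, not_forall, not_le] using hanti
    refine ⟨i.succ, ?_⟩
    rw [alcoveSqDist_sigmaMove_succ]
    exact sub_lt_self _ (mul_pos (by positivity) (sub_pos.2 hi))

lemma exists_mem_alcove_sameOrbit {c : ℤ} (hc : 0 < c) (v : Fin (m + 2) → ℤ) :
    ∃ r ∈ alcove _ c, SameOrbit c v r := by
  by_cases hv : v ∈ alcove _ c
  · exact ⟨v, hv, .refl v⟩
  obtain ⟨i, hi⟩ := exists_alcoveSqDist_sigmaMove_lt hc hv
  have : (alcoveSqDist (sigmaMove (m + 2) c i v)).toNat < (alcoveSqDist v).toNat :=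
    (Int.toNat_lt_toNat ((alcoveSqDist_nonneg _).trans_lt hi)).2 hi
  obtain ⟨r, hr, horbit⟩ := exists_mem_alcove_sameOrbit hc (sigmaMove (m + 2) c i v)
  exact ⟨r, hr, .trans _ _ _ (.rel _ _ ⟨i, rfl⟩) horbit⟩
termination_by (alcoveSqDist v).toNat

end Existence

/-- `A_{n,l}(s)` is a fundamental domain for the action on `ℤ^n(s)` of the group of
bijections generated by `σ_0, …, σ_{n−1}`: every orbit contains exactly one element
`r` with `r_1 ≥ ⋯ ≥ r_n` and `r_1 − r_n ≤ l`.  (Each `σ_i` is an involution, so the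
orbits are the classes of the equivalence generated by the moves `x ↦ σ_i x`.) -/
theorem stmt_2 (n l : ℕ) (hn : 2 ≤ n) (hl : 2 ≤ l) (s : ℤ)
    (v : Fin n → ℤ) (hv : ∑ i, v i = s) :
    ∃! r : Fin n → ℤ,
      ((∑ i, r i = s) ∧ (∀ i j : Fin n, i ≤ j → r j ≤ r i) ∧
        r ⟨0, by omega⟩ - r ⟨n - 1, by omega⟩ ≤ (l : ℤ)) ∧
      Relation.EqvGen (fun x y => ∃ i : Fin n, y = sigmaMove n (l : ℤ) i x) v r := by
  obtain ⟨m, rfl⟩ := Nat.exists_eq_add_of_le' hn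
  have hl_pos : (0 : ℤ) < l := by lia
  obtain ⟨r, hr, hvr⟩ := exists_mem_alcove_sameOrbit hl_pos v
  obtain ⟨hanti, hwidth⟩ := mem_alcove_fin.1 hr
  refine ⟨r, ⟨⟨hvr.sum_eq.symm.trans hv, fun _ _ => @hanti _ _, hwidth⟩, hvr⟩, ?_⟩
  rintro y ⟨⟨-, hy_anti, hy_width⟩, hvy⟩
  have hyr : SameOrbit (l : ℤ) y r := .trans _ _ _ (.symm _ _ hvy) hvr
  exact hyr.eq_of_mem_alcove hl_pos (mem_alcove_fin.2 ⟨hy_anti, hy_width⟩) hr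
end

section
/- For all s_l = (s_1,…,s_l) and t_l = (t_1,…,t_l) in ℤ^l(s) such that s_i ≡ t_i (mod n) for every 1 ≤ i ≤ l, there is a finite composition of the bijections τ̇_1, …, τ̇_{l−1} and their inverses mapping s_l to t_l; in other words, the group generated by τ̇_1, …, τ̇_{l−1} acts transitively on L_{s_l}. -/
/-- The move `τ̇` acting on `ℤ^l` at (0-indexed) position `k`: it adds `c` to the `k`-th
entry and subtracts `c` from the `(k+1)`-th entry.  The bijection `τ̇_i` of the paper
(`1 ≤ i ≤ l−1`) is `tauMove l n (i−1)`, and its inverse is `tauMove l (−n) (i−1)`. -/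
def tauMove (l : ℕ) (c : ℤ) (k : ℕ) (v : Fin l → ℤ) : Fin l → ℤ := fun j =>
  if j.val = k then v j + c else if j.val = k + 1 then v j - c else v j

/-!
Each `τ̇_i` is the translation of `ℤ^l` by `n (e_i - e_{i+1})`, so the orbits of the group they
generate are the cosets of the group generated by these vectors. Regarding the indices as vertices
of a path, telescoping along the path shows that the latter group contains `n (e_i - e_j)` for all
`i` and `j`. Hence it contains every `f ∈ (nℤ)^l` whose entries sum to zero, because such an `f`
equals `∑ i, f_i (e_i - e_r)` for any fixed `r`. The same works for any finite connected graph.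
-/

theorem reflTransGen_sub_mem_of_sub_mem_closure {A : Type*} [AddGroup A] {D : Set A}
    (hneg : ∀ d ∈ D, -d ∈ D) {x y : A} (h : y - x ∈ AddSubgroup.closure D) :
    Relation.ReflTransGen (fun x y => y - x ∈ D) x y := by
  suffices ∀ d ∈ AddSubgroup.closure D, Relation.ReflTransGen (fun x y => y - x ∈ D) x (d + x) by
    simpa only [sub_add_cancel] using this _ h
  intro d hd
  induction hd using AddSubgroup.closure_induction_left with
  | zero => rw [zero_add]
  | add_left d hd e _ ih => exact ih.tail (by rwa [add_assoc, add_sub_cancel_right])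
  | neg_add_cancel d hd e _ ih =>
    exact ih.tail (by simpa only [add_assoc, add_sub_cancel_right] using hneg d hd)

section EdgeTransfers

variable {V M : Type*} [DecidableEq V] [AddCommGroup M] {G : SimpleGraph V} {S : Set M}

/-- The elementary transfers on a graph `G` with amounts in `S`: adding such a vector to a
configuration `V → M` moves an amount `c ∈ S` across an edge of `G`. Both orientations of every edge
are included, so that the inverse of a transfer is again a transfer. -/
def edgeTransfers (G : SimpleGraph V) (S : Set M) : Set (V → M) :=
  {d | ∃ u v, G.Adj u v ∧ ∃ c ∈ S, d = Pi.single u c - Pi.single v c}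

theorem neg_mem_edgeTransfers {d : V → M} (hd : d ∈ edgeTransfers G S) :
    -d ∈ edgeTransfers G S := by
  obtain ⟨u, v, huv, c, hc, rfl⟩ := hd
  exact ⟨v, u, huv.symm, c, hc, neg_sub _ _⟩

theorem single_sub_single_mem_closure_edgeTransfers_of_adj {u v : V} (huv : G.Adj u v) {g : M}
    (hg : g ∈ AddSubgroup.closure S) :
    Pi.single u g - Pi.single v g ∈ AddSubgroup.closure (edgeTransfers G S) := by
  let transfer : M →+ V → M :=
    AddMonoidHom.single (fun _ : V => M) u - AddMonoidHom.single (fun _ : V => M) v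
  have hle : AddSubgroup.closure S ≤
      (AddSubgroup.closure (edgeTransfers G S)).comap transfer :=
    (AddSubgroup.closure_le _).2 fun c hc => AddSubgroup.subset_closure ⟨u, v, huv, c, hc, rfl⟩
  exact hle hg

theorem single_sub_single_mem_closure_edgeTransfers {u v : V} (huv : G.Reachable u v) {g : M}
    (hg : g ∈ AddSubgroup.closure S) :
    Pi.single u g - Pi.single v g ∈ AddSubgroup.closure (edgeTransfers G S) := by
  obtain ⟨walk⟩ := huv
  induction walk with
  | nil => simp only [sub_self, zero_mem]
  | @cons u v w huv _ ih =>
    rw [← sub_add_sub_cancel _ (Pi.single v g)]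
    exact add_mem (single_sub_single_mem_closure_edgeTransfers_of_adj huv hg) ih

variable [Fintype V]

theorem eq_sum_single_sub_single {f : V → M} (hf : ∑ i, f i = 0) (r : V) :
    f = ∑ i, (Pi.single i (f i) - Pi.single r (f i)) := by
  have hr : ∑ i, Pi.single r (f i) = (0 : V → M) := by
    rw [← Pi.single_zero r, ← hf]
    exact (map_sum (AddMonoidHom.single (fun _ : V => M) r) f Finset.univ).symm
  rw [Finset.sum_sub_distrib, hr, sub_zero, Finset.univ_sum_single]

theorem mem_closure_edgeTransfers_of_sum_eq_zero (hG : G.Preconnected) {f : V → M}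
    (hf : ∑ i, f i = 0) (hmem : ∀ i, f i ∈ AddSubgroup.closure S) :
    f ∈ AddSubgroup.closure (edgeTransfers G S) := by
  cases isEmpty_or_nonempty V with
  | inl _ => exact Subsingleton.elim 0 f ▸ zero_mem _
  | inr hV =>
    obtain ⟨r⟩ := hV
    rw [eq_sum_single_sub_single hf r]
    exact sum_mem fun i _ => single_sub_single_mem_closure_edgeTransfers (hG i r) (hmem i)

theorem stmt_3_general (hG : G.Preconnected) {a b : V → M} (hsum : ∑ i, a i = ∑ i, b i)
    (hmem : ∀ i, b i - a i ∈ AddSubgroup.closure S) :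
    Relation.ReflTransGen (fun x y => y - x ∈ edgeTransfers G S) a b := by
  refine reflTransGen_sub_mem_of_sub_mem_closure (fun _ => neg_mem_edgeTransfers)
    (mem_closure_edgeTransfers_of_sum_eq_zero hG ?_ hmem)
  simp only [Pi.sub_apply, Finset.sum_sub_distrib, hsum, sub_self]

end EdgeTransfers

theorem tauMove_eq_add_single_sub_single {l k : ℕ} (hk : k + 1 < l) (c : ℤ) (x : Fin l → ℤ) :
    tauMove l c k x = x + (Pi.single ⟨k, by omega⟩ c - Pi.single ⟨k + 1, hk⟩ c) := by
  funext j
  simp only [tauMove, Pi.add_apply, Pi.sub_apply, Pi.single_apply, Fin.ext_iff]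
  split_ifs <;> omega

theorem sub_mem_edgeTransfers_pathGraph_iff {l : ℕ} {c : ℤ} {x y : Fin l → ℤ} :
    y - x ∈ edgeTransfers (SimpleGraph.pathGraph l) {c} ↔
      ∃ k, k + 1 < l ∧ (y = tauMove l c k x ∨ y = tauMove l (-c) k x) := by
  constructor
  · rintro ⟨⟨u, hu⟩, ⟨v, hv⟩, huv, _, rfl, hd⟩
    rw [sub_eq_iff_eq_add'] at hd
    obtain rfl | rfl : u + 1 = v ∨ v + 1 = u := SimpleGraph.pathGraph_adj.1 huv
    · exact ⟨u, hv, .inl (by rw [hd, tauMove_eq_add_single_sub_single hv])⟩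
    · refine ⟨v, hu, .inr ?_⟩
      rw [hd, tauMove_eq_add_single_sub_single hu, Pi.single_neg, Pi.single_neg, neg_sub_neg]
  · rintro ⟨k, hk, rfl | rfl⟩
    · exact ⟨_, _, SimpleGraph.pathGraph_adj.2 (.inl rfl), c, rfl,
        by rw [tauMove_eq_add_single_sub_single hk, add_sub_cancel_left]⟩
    · refine ⟨⟨k + 1, hk⟩, ⟨k, by omega⟩, SimpleGraph.pathGraph_adj.2 (.inr rfl), c, rfl, ?_⟩
      rw [tauMove_eq_add_single_sub_single hk, add_sub_cancel_left, Pi.single_neg, Pi.single_neg,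
        neg_sub_neg]

theorem modEq_iff_sub_mem_closure_singleton {c a b : ℤ} :
    a ≡ b [ZMOD c] ↔ b - a ∈ AddSubgroup.closure {c} := by
  rw [Int.modEq_iff_dvd, ← Int.mem_zmultiples_iff, AddSubgroup.zmultiples_eq_closure]

/-- If `s_l, t_l ∈ ℤ^l(s)` are componentwise congruent modulo `n`, then some finite
composition of the `τ̇_1, …, τ̇_{l−1}` and their inverses maps `s_l` to `t_l`:
the group generated by the `τ̇_i` acts transitively on `L_{s_l}`. -/
theorem stmt_3 (n l : ℕ) (hn : 2 ≤ n) (hl : 2 ≤ l) (s : ℤ)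
    (a b : Fin l → ℤ) (ha : ∑ i, a i = s) (hb : ∑ i, b i = s)
    (hcong : ∀ i, a i ≡ b i [ZMOD (n : ℤ)]) :
    Relation.ReflTransGen
      (fun x y => ∃ k : ℕ, k + 1 < l ∧
        (y = tauMove l (n : ℤ) k x ∨ y = tauMove l (-(n : ℤ)) k x)) a b := by
  simp only [← sub_mem_edgeTransfers_pathGraph_iff]
  exact stmt_3_general (SimpleGraph.pathGraph_preconnected l) (ha.trans hb.symm)
    fun i => modEq_iff_sub_mem_closure_singleton.1 (hcong i)
end

section
/- Suppose l ≥ 5 and 2 ≤ i ≤ l−3. Then, as bijections of ℤ^l(s), one has the factorization τ̇_i = σ̇_{i−1} ∘ σ̇_{i−2} ∘ ⋯ ∘ σ̇_1 ∘ σ̇_0 ∘ σ̇_{l−1} ∘ ⋯ ∘ σ̇_{i+2} ∘ σ̇_{i+1} ∘ σ̇_{i+2} ∘ ⋯ ∘ σ̇_{l−1} ∘ σ̇_0 ∘ σ̇_1 ∘ ⋯ ∘ σ̇_i, where composition is read right to left (the rightmost map is applied first). -/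
/-- Apply a word in the generators `σ̇_j` (given as a list of indices, read left to
right, the rightmost letter acting first). -/
def applyWord (l : ℕ) (hl : 0 < l) (c : ℤ) (w : List ℕ) (v : Fin l → ℤ) : Fin l → ℤ :=
  w.foldr (fun i u => sigmaMove l c ⟨i % l, Nat.mod_lt i hl⟩ u) v

/-!
The map `σ̇_b` is the affine reflection in `s_{b+1} = s_b` for `b ≥ 1`, and in `s_1 = s_l + n`
for `b = 0`. Conjugating a reflection that moves the `b`-th entry by `σ̇_b` replaces `b` by
`b + 1`, cyclically, and adds `n` to the offset when `b = 0`. Apart from its rightmost letter `σ̇_i`,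
the word of the theorem is the conjugate of `σ̇_{i+1}` by `σ̇_{i-1} ⋯ σ̇_0 σ̇_{l-1} ⋯ σ̇_{i+2}`:
one of the two entries moved by `σ̇_{i+1}` travels from `i + 2` through `l` and around to `i`,
so this conjugate is the reflection in `s_i = s_{i+1} + n`. Composed with the parallel
reflection `σ̇_i` it is the translation `τ̇_i`.
-/

theorem map_add_range_reverse_succ (b m : ℕ) :
    ((List.range (m + 1)).map (fun k => b + k)).reverse =
      (List.range' (b + 1) m).reverse ++ [b] := by
  rw [← List.range'_eq_map_range, List.range'_succ, List.reverse_cons]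

section AffineSwap

variable {ι A : Type*} [DecidableEq ι] [AddGroup A]

/-- For `p ≠ q`, the affine reflection of `ι → A` in the hyperplane `v p = v q + a`: it exchanges
the entries at `p` and `q`, adding `a` to the one that arrives at `p` and subtracting it from the
other. Each `σ̇_b` is of this form. -/
def affineSwap (p q : ι) (a : A) (v : ι → A) : ι → A := fun j =>
  if j = p then v q + a else if j = q then v p - a else v j

theorem affineSwap_conj {p q r : ι} (hpq : p ≠ q) (hpr : p ≠ r) (hqr : q ≠ r) (a b : A)
    (v : ι → A) :
    affineSwap p q a (affineSwap q r b (affineSwap p q a v)) = affineSwap p r (b + a) v := by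
  funext j
  rcases eq_or_ne j p with rfl | hjp
  · simp [affineSwap, hpr.symm, hqr.symm, add_assoc]
  rcases eq_or_ne j q with rfl | hjq
  · simp [affineSwap, hpq, hpr, hpq.symm, hqr]
  rcases eq_or_ne j r with rfl | hjr
  · simp [affineSwap, hpq.symm, hjp, hjq, sub_eq_add_neg, add_assoc]
  · simp [affineSwap, hjp, hjq, hjr]

theorem affineSwap_affineSwap_swap (p q : ι) (a b : A) (v : ι → A) :
    affineSwap p q a (affineSwap q p b v) =
      fun j => if j = p then v j + b + a else if j = q then v j - b - a else v j := by
  funext j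
  rcases eq_or_ne j p with rfl | hjp
  · simp [affineSwap]
  rcases eq_or_ne j q with rfl | hjq
  · simp [affineSwap, hjp, hjp.symm]
  · simp [affineSwap, hjp, hjq]

end AffineSwap

section Moves

variable {l : ℕ} (hl : 0 < l) (c : ℤ)

theorem sigmaMove_zero_s4 : sigmaMove l c ⟨0, hl⟩ = affineSwap ⟨0, hl⟩ ⟨l - 1, by omega⟩ c := by
  funext v j
  simp [sigmaMove, affineSwap, Fin.ext_iff]

theorem sigmaMove_succ_s4 {b : ℕ} (hb : b + 1 < l) :
    sigmaMove l c ⟨b + 1, hb⟩ = affineSwap ⟨b + 1, hb⟩ ⟨b, by omega⟩ 0 := by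
  funext v j
  simp only [sigmaMove, affineSwap, Fin.ext_iff]
  grind

theorem tauMove_eq_affineSwap_affineSwap {k : ℕ} (hk : k + 1 < l) (v : Fin l → ℤ) :
    tauMove l c k v =
      affineSwap ⟨k, by omega⟩ ⟨k + 1, hk⟩ c (affineSwap ⟨k + 1, hk⟩ ⟨k, by omega⟩ 0 v) := by
  funext j
  simp only [affineSwap_affineSwap_swap, tauMove, Fin.ext_iff, add_zero, sub_zero]

theorem applyWord_append (w w' : List ℕ) (v : Fin l → ℤ) :
    applyWord l hl c (w ++ w') v = applyWord l hl c w (applyWord l hl c w' v) :=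
  List.foldr_append

theorem applyWord_singleton {b : ℕ} (hb : b < l) (v : Fin l → ℤ) :
    applyWord l hl c [b] v = sigmaMove l c ⟨b, hb⟩ v := by
  simp only [applyWord, List.foldr_cons, List.foldr_nil, Nat.mod_eq_of_lt hb]

theorem applyWord_conj_range' {p m : ℕ} (hpm : p + m < l) {q : Fin l}
    (hq : q.val < p ∨ p + m < q.val) (a : ℤ) (v : Fin l → ℤ) :
    applyWord l hl c (List.range' (p + 1) m).reverse
        (affineSwap ⟨p, by omega⟩ q a (applyWord l hl c (List.range' (p + 1) m) v)) =
      affineSwap ⟨p + m, hpm⟩ q a v := by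
  induction m generalizing v with
  | zero => rfl
  | succ m ih =>
    have hletter : p + 1 + m = p + m + 1 := by omega
    rw [List.range'_1_concat, List.reverse_concat', hletter, ← List.singleton_append,
      applyWord_append, applyWord_append, ih (by omega) (by omega)]
    simp only [applyWord_singleton hl c (show p + m + 1 < l from hpm), sigmaMove_succ_s4]
    rw [affineSwap_conj (by simp) (by grind) (by grind), add_zero]
    rfl

theorem applyWord_conj_zero {q : Fin l} (hq0 : 0 < q.val) (hql : q.val < l - 1) (a : ℤ)
    (v : Fin l → ℤ) :
    applyWord l hl c [0] (affineSwap ⟨l - 1, by omega⟩ q a (applyWord l hl c [0] v)) =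
      affineSwap ⟨0, hl⟩ q (a + c) v := by
  simp only [applyWord_singleton hl c hl, sigmaMove_zero_s4]
  exact affineSwap_conj (by simp only [ne_eq, Fin.mk.injEq]; omega) (by grind) (by grind) c a v

theorem applyWord_eq_affineSwap {k m : ℕ} (hkm : k + m + 3 = l) (v : Fin l → ℤ) :
    applyWord l hl c
        ((List.range' 1 k).reverse ++ [0] ++ (List.range' (k + 3) m).reverse ++ [k + 2] ++
          List.range' (k + 3) m ++ [0] ++ List.range' 1 k) v =
      affineSwap ⟨k, by omega⟩ ⟨k + 1, by omega⟩ c v := by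
  have hlast : (⟨k + 2 + m, by omega⟩ : Fin l) = ⟨l - 1, by omega⟩ := by
    simp only [Fin.mk.injEq]
    omega
  have hk : (⟨0 + k, by omega⟩ : Fin l) = ⟨k, by omega⟩ := by
    simp only [zero_add]
  simp only [applyWord_append]
  rw [applyWord_singleton hl c (show k + 1 + 1 < l by omega), sigmaMove_succ_s4,
    applyWord_conj_range' hl c (by omega) (by simp), hlast,
    applyWord_conj_zero hl c (by simp) (by simp only; omega),
    applyWord_conj_range' hl c (by omega) (by simp), hk, zero_add]

end Moves

theorem stmt_4_general (l : ℕ) (c : ℤ) (i : ℕ) (hi : 1 ≤ i) (hil : i + 2 ≤ l) (v : Fin l → ℤ) :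
    applyWord l (by omega) c
      ((List.range i).reverse ++
        ((List.range (l - 1 - i)).map (fun k => i + 1 + k)).reverse ++
        (List.range (l - 2 - i)).map (fun k => i + 2 + k) ++
        [0] ++
        (List.range i).map (fun k => k + 1)) v
      = tauMove l c (i - 1) v := by
  obtain ⟨k, rfl⟩ : ∃ k, i = k + 1 := ⟨i - 1, by omega⟩
  obtain ⟨m, rfl⟩ : ∃ m, l = k + m + 3 := ⟨l - k - 3, by omega⟩
  have hdesc : (List.range (k + 1)).reverse = (List.range' 1 k).reverse ++ [0] := by
    simpa using map_add_range_reverse_succ 0 k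
  have hasc : (List.range (k + 1)).map (fun j => j + 1) = List.range' 1 k ++ [k + 1] := by
    simp only [List.range_succ, List.map_append, List.map_singleton, List.range'_eq_map_range,
      add_comm 1]
  have hm : k + m + 3 - 2 - (k + 1) = m := by omega
  have hm_succ : k + m + 3 - 1 - (k + 1) = m + 1 := by omega
  rw [hdesc, hasc, hm, hm_succ, map_add_range_reverse_succ, ← List.range'_eq_map_range,
    ← List.append_assoc _ _ [k + 1], applyWord_append, applyWord_singleton _ _ (by omega),
    sigmaMove_succ_s4, add_tsub_cancel_right, tauMove_eq_affineSwap_affineSwap _ (by omega)]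
  simpa only [List.append_assoc] using applyWord_eq_affineSwap _ c rfl _

/-- For `l ≥ 5` and `2 ≤ i ≤ l−3` (1-indexed), one has the factorization
`τ̇_i = σ̇_{i−1} ⋯ σ̇_1 σ̇_0 σ̇_{l−1} ⋯ σ̇_{i+2} σ̇_{i+1} σ̇_{i+2} ⋯ σ̇_{l−1} σ̇_0 σ̇_1 ⋯ σ̇_i`
as bijections of `ℤ^l(s)` (the rightmost map is applied first). -/
theorem stmt_4 (n l : ℕ) (hn : 2 ≤ n) (hl : 5 ≤ l) (s : ℤ)
    (i : ℕ) (hi1 : 2 ≤ i) (hi2 : i ≤ l - 3)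
    (v : Fin l → ℤ) (hv : ∑ j, v j = s) :
    applyWord l (by omega) (n : ℤ)
      ((List.range i).reverse ++
        ((List.range (l - 1 - i)).map (fun k => i + 1 + k)).reverse ++
        (List.range (l - 2 - i)).map (fun k => i + 2 + k) ++
        [0] ++
        (List.range i).map (fun k => k + 1)) v
      = tauMove l (n : ℤ) (i - 1) v :=
  stmt_4_general l n i (by omega) (by omega) v
end

section
/- For every b ∈ ℝ^{l−1}, the set A(b) is nonempty. -/
/-- The Cartan matrix of `sl_l`: `A_{ii} = 2`, `A_{ij} = −1` if `|i−j| = 1`, `0` otherwise. -/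
def cartanA (l : ℕ) : Matrix (Fin (l - 1)) (Fin (l - 1)) ℝ :=
  Matrix.of fun i j => if i = j then 2 else if i.val + 1 = j.val ∨ j.val + 1 = i.val then -1 else 0

/-- The cone `C_b = {x ∈ ℝ^{l−1} : A·x ≥ b}` (inequalities componentwise). -/
def cone (l : ℕ) (b : Fin (l - 1) → ℝ) : Set (Fin (l - 1) → ℝ) :=
  {x | ∀ i, (cartanA l).mulVec x i ≥ b i}

/-- A point of `ℝ^d` with integer coordinates. -/
def IsIntPt {d : ℕ} (x : Fin d → ℝ) : Prop := ∀ i, ∃ z : ℤ, x i = (z : ℝ)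

/-- `x` and `y` are ℤ-connected in `D`: there is a finite sequence of integer points of
`D` from `x` to `y` whose consecutive differences are `±ε_j` for standard basis
vectors `ε_j`. -/
def ZConn {d : ℕ} (D : Set (Fin d → ℝ)) (x y : Fin d → ℝ) : Prop :=
  ∃ (N : ℕ) (p : ℕ → Fin d → ℝ), p 0 = x ∧ p N = y ∧
    (∀ k ≤ N, p k ∈ D ∧ IsIntPt (p k)) ∧
    ∀ k < N, ∃ j : Fin d,
      (p (k + 1) = fun m => p k m + if m = j then 1 else 0) ∨
      (p (k + 1) = fun m => p k m - if m = j then 1 else 0)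

/-- `A(b) = {c ≤ b : any two integer points of C_b are ℤ-connected in C_c}`. -/
def calA (l : ℕ) (b : Fin (l - 1) → ℝ) : Set (Fin (l - 1) → ℝ) :=
  {c | (∀ i, c i ≤ b i) ∧
    ∀ x y : Fin (l - 1) → ℝ, x ∈ cone l b → y ∈ cone l b →
      IsIntPt x → IsIntPt y → ZConn (cone l c) x y}

/-!
Only two properties of the Cartan matrix `A` matter: it is a Z-matrix (its off-diagonal entries are
nonpositive), and `A u ≥ 0` for some positive vector `u`; for `sl_l` take `u = 1`. The vector
`c = b - diag A` then works. Since `A` is a Z-matrix, `C_b` is closed under componentwise minima,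
so it suffices to descend within `C_c` from an integer point `x` of `C_b` to an integer point
`m ≤ x` of `C_b`. Let `t` be the largest of the ratios `(x_i - m_i) / u_i`, attained at `i`. Then
`x ≤ m + t u` with equality at `i`, so `(A x)_i ≥ (A (m + t u))_i ≥ (A m)_i ≥ b_i`. Lowering the
coordinate `x_i` by one thus leaves `(A x)_i ≥ b_i - A_{ii}` and decreases no other entry of `A x`.
-/

open Matrix SimpleGraph

section HasseDiagram

lemma reachable_induce_hasse_of_forall_exists_covBy {α : Type*} [PartialOrder α]
    [LocallyFiniteOrder α] {s : Set α} {m : s}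
    (h : ∀ x : s, m < x → ∃ y : s, m ≤ y ∧ (y : α) ⋖ x) (x : s) (hmx : m ≤ x) :
    ((hasse α).induce s).Reachable x m := by
  induction hn : (Finset.Icc (m : α) x).card using Nat.strong_induction_on generalizing x with
  | h n ih =>
    obtain rfl | hlt := hmx.eq_or_lt
    · exact Reachable.refl _
    · obtain ⟨y, hmy, hyx⟩ := h x hlt
      have hcard : (Finset.Icc (m : α) y).card < n :=
        hn ▸ Finset.card_lt_card (Finset.Icc_ssubset_Icc_right hmx le_rfl hyx.lt)
      have hadj : ((hasse α).induce s).Adj x y := Or.inr hyx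
      exact hadj.reachable.trans (ih _ hcard y hmy rfl)

lemma covBy_iff_exists_eq_add_single {ι α : Type*} [DecidableEq ι] [PartialOrder α]
    [AddZeroClass α] [One α] [SuccAddOrder α] [NoMaxOrder α] {v w : ι → α} :
    v ⋖ w ↔ ∃ j, w = v + Pi.single j 1 := by
  have hupdate : ∀ j, Function.update v j (v j + 1) = v + Pi.single j 1 := by
    intro j
    ext k
    obtain rfl | hkj := eq_or_ne k j <;> simp [*]
  simp only [Pi.covBy_iff_exists_right_eq, Order.covBy_iff_add_one_eq, exists_eq_left', hupdate]

lemma zConn_of_reachable_induce_hasse {d : ℕ} {s : Set (Fin d → ℤ)} {D : Set (Fin d → ℝ)}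
    (hsD : Set.MapsTo (Int.cast ∘ ·) s D) {v w : s}
    (h : ((hasse (Fin d → ℤ)).induce s).Reachable v w) :
    ZConn D (Int.cast ∘ v.1) (Int.cast ∘ w.1) := by
  obtain ⟨p⟩ := h
  refine ⟨p.length, fun k => Int.cast ∘ (p.getVert k).1, by simp, by simp,
    fun k _ => ⟨hsD (p.getVert k).2, fun i => ⟨_, rfl⟩⟩, fun k hk => ?_⟩
  obtain hup | hdown : _ ⋖ _ ∨ _ ⋖ _ := p.adj_getVert_succ hk
  · obtain ⟨j, hj⟩ := covBy_iff_exists_eq_add_single.1 hup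
    refine ⟨j, Or.inl (funext fun i => ?_)⟩
    simp only [Function.Embedding.subtype_apply] at hj
    simp [hj, Pi.single_apply]
  · obtain ⟨j, hj⟩ := covBy_iff_exists_eq_add_single.1 hdown
    refine ⟨j, Or.inr (funext fun i => ?_)⟩
    simp only [Function.Embedding.subtype_apply] at hj
    simp [hj, Pi.single_apply]

end HasseDiagram

/-- A Z-matrix is a square matrix whose off-diagonal entries are all nonpositive. -/
def IsZMatrix {ι R : Type*} [Zero R] [LE R] (A : Matrix ι ι R) : Prop :=
  Pairwise fun i j => A i j ≤ 0

/-- The integer points of the polyhedron `A x ≥ b`, encoded as integer vectors. -/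
def intCone {ι R : Type*} [Fintype ι] [Ring R] [LE R] (A : Matrix ι ι R) (b : ι → R) :
    Set (ι → ℤ) :=
  {v | b ≤ A *ᵥ (Int.cast ∘ v)}

lemma exists_le_add_smul_of_lt {ι R : Type*} [Finite ι] [Field R] [LinearOrder R]
    [IsStrictOrderedRing R] {u m x : ι → R} (hu : ∀ i, 0 < u i) (hmx : m < x) :
    ∃ i, ∃ t : R, 0 < t ∧ x ≤ m + t • u ∧ x i = (m + t • u) i := by
  obtain ⟨-, k, hk⟩ := Pi.lt_def.1 hmx
  have : Nonempty ι := ⟨k⟩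
  obtain ⟨i, hi⟩ := Finite.exists_max fun j => (x j - m j) / u j
  have hpos : 0 < (x k - m k) / u k := div_pos (sub_pos.2 hk) (hu k)
  refine ⟨i, (x i - m i) / u i, hpos.trans_le (hi k), fun j => ?_, ?_⟩
  · exact sub_le_iff_le_add'.1 ((div_le_iff₀ (hu j)).1 (hi j))
  · simp [(hu i).ne']

namespace IsZMatrix

variable {ι R : Type*} [Fintype ι]

section OrderedRing

variable [Ring R] [PartialOrder R] [IsOrderedRing R] {A : Matrix ι ι R} {b x y : ι → R} {i : ι}

lemma mulVec_apply_le_of_le_of_eq (hA : IsZMatrix A) (hyx : y ≤ x) (hi : y i = x i) :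
    (A *ᵥ x) i ≤ (A *ᵥ y) i := by
  refine Finset.sum_le_sum fun j _ => ?_
  obtain rfl | hij := eq_or_ne i j
  · rw [hi]
  · exact mul_le_mul_of_nonpos_left (hyx j) (hA hij)

lemma sub_single_mem_intCone [DecidableEq ι] (hA : IsZMatrix A) {v : ι → ℤ}
    (hv : v ∈ intCone A (b - A.diag)) (hi : b i ≤ (A *ᵥ (Int.cast ∘ v)) i) :
    v - Pi.single i 1 ∈ intCone A (b - A.diag) := by
  have hcast : (Int.cast ∘ (v - Pi.single i 1) : ι → R) = Int.cast ∘ v - Pi.single i 1 := by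
    ext j
    simp [Pi.single_apply]
  intro j
  rw [hcast, mulVec_sub, mulVec_single_one]
  obtain rfl | hij := eq_or_ne i j
  · exact sub_le_sub_right hi _
  · exact (hv j).trans (le_sub_self_iff _ |>.2 (hA hij.symm))

end OrderedRing

lemma mulVec_apply_le_of_le_add_smul [CommRing R] [PartialOrder R] [IsOrderedRing R]
    {A : Matrix ι ι R} {m u x : ι → R} {i : ι} (hA : IsZMatrix A)
    (hAu : 0 ≤ (A *ᵥ u) i) {t : R} (ht : 0 ≤ t) (hx : x ≤ m + t • u)
    (hi : x i = (m + t • u) i) : (A *ᵥ m) i ≤ (A *ᵥ x) i :=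
  calc (A *ᵥ m) i ≤ (A *ᵥ m) i + t * (A *ᵥ u) i :=
        le_add_of_nonneg_right (mul_nonneg ht hAu)
    _ = (A *ᵥ (m + t • u)) i := by simp [mulVec_add, mulVec_smul]
    _ ≤ (A *ᵥ x) i := hA.mulVec_apply_le_of_le_of_eq hx hi

section LinearOrderedRing

variable [Ring R] [LinearOrder R] [IsStrictOrderedRing R] {A : Matrix ι ι R} {b u : ι → R}

lemma diag_nonneg (hA : IsZMatrix A) (hu : ∀ i, 0 < u i) (hAu : 0 ≤ A *ᵥ u) : 0 ≤ A.diag := by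
  classical
  intro i
  have hle : Pi.single i (u i) ≤ u := by
    intro j
    obtain rfl | hji := eq_or_ne j i
    · simp
    · simp [hji, (hu j).le]
  have hmul : 0 ≤ A i i * u i :=
    calc 0 ≤ (A *ᵥ u) i := hAu i
      _ ≤ (A *ᵥ Pi.single i (u i)) i := hA.mulVec_apply_le_of_le_of_eq hle (by simp)
      _ = A i i * u i := by simp [mulVec_single]
  exact nonneg_of_mul_nonneg_left hmul (hu i)

lemma inf_mem_intCone (hA : IsZMatrix A) {v w : ι → ℤ} (hv : v ∈ intCone A b)
    (hw : w ∈ intCone A b) : v ⊓ w ∈ intCone A b := by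
  intro i
  obtain h | h := le_total (v i) (w i)
  · exact (hv i).trans (hA.mulVec_apply_le_of_le_of_eq (fun j => by simp) (by simp [h]))
  · exact (hw i).trans (hA.mulVec_apply_le_of_le_of_eq (fun j => by simp) (by simp [h]))

end LinearOrderedRing

section LinearOrderedField

variable [Field R] [LinearOrder R] [IsStrictOrderedRing R] {A : Matrix ι ι R} {b u : ι → R}

lemma exists_covBy_mem_intCone (hA : IsZMatrix A) (hu : ∀ i, 0 < u i) (hAu : 0 ≤ A *ᵥ u)
    {m v : ι → ℤ} (hm : m ∈ intCone A b) (hv : v ∈ intCone A (b - A.diag)) (hmv : m < v) :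
    ∃ w ∈ intCone A (b - A.diag), m ≤ w ∧ w ⋖ v := by
  classical
  have hcast : (Int.cast ∘ m : ι → R) < Int.cast ∘ v := by
    simpa only [Pi.lt_def, Pi.le_def, Function.comp_apply, Int.cast_le, Int.cast_lt] using hmv
  obtain ⟨i, t, ht, hle, heq⟩ := exists_le_add_smul_of_lt hu hcast
  have hi : m i < v i := by
    have : (m i : R) < v i := by
      calc (m i : R) < m i + t * u i := lt_add_of_pos_right _ (mul_pos ht (hu i))
        _ = v i := heq.symm
    exact_mod_cast this
  refine ⟨v - Pi.single i 1, hA.sub_single_mem_intCone hv ?_, fun j => ?_, ?_⟩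
  · exact (hm i).trans (hA.mulVec_apply_le_of_le_add_smul (hAu i) ht.le hle heq)
  · obtain rfl | hij := eq_or_ne j i
    · simpa using Int.le_sub_one_of_lt hi
    · simpa [hij] using hmv.le j
  · exact covBy_iff_exists_eq_add_single.2 ⟨i, by simp⟩

theorem reachable_induce_hasse_intCone (hA : IsZMatrix A) (hu : ∀ i, 0 < u i)
    (hAu : 0 ≤ A *ᵥ u) {v w : intCone A (b - A.diag)} (hv : v.1 ∈ intCone A b)
    (hw : w.1 ∈ intCone A b) :
    ((hasse (ι → ℤ)).induce (intCone A (b - A.diag))).Reachable v w := by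
  classical
  have hm : v.1 ⊓ w.1 ∈ intCone A b := hA.inf_mem_intCone hv hw
  let m : intCone A (b - A.diag) :=
    ⟨v.1 ⊓ w.1, (sub_le_self b (hA.diag_nonneg hu hAu)).trans hm⟩
  have hdescent : ∀ x, m ≤ x → ((hasse (ι → ℤ)).induce (intCone A (b - A.diag))).Reachable x m :=
    reachable_induce_hasse_of_forall_exists_covBy fun x hmx => by
      obtain ⟨y, hy, hmy, hyx⟩ := hA.exists_covBy_mem_intCone hu hAu hm x.2 hmx
      exact ⟨⟨y, hy⟩, hmy, hyx⟩
  have hmv : m ≤ v := Subtype.coe_le_coe.1 inf_le_left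
  have hmw : m ≤ w := Subtype.coe_le_coe.1 inf_le_right
  exact (hdescent v hmv).trans (hdescent w hmw).symm

end LinearOrderedField

end IsZMatrix

lemma isZMatrix_cartanA (l : ℕ) : IsZMatrix (cartanA l) := by
  intro i j hij
  simp only [cartanA, of_apply, if_neg hij]
  split_ifs <;> norm_num

lemma cartanA_mulVec_one_nonneg (l : ℕ) : 0 ≤ cartanA l *ᵥ 1 := by
  intro i
  let neighbors := Finset.univ.filter fun j : Fin (l - 1) => i.val + 1 = j.val ∨ j.val + 1 = i.val
  have hcard : neighbors.card ≤ 2 := by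
    have hsub : neighbors.map Fin.valEmbedding ⊆ {i.val + 1, i.val - 1} := by
      intro k
      simp only [neighbors, Finset.mem_map, Finset.mem_filter_univ, Fin.valEmbedding_apply,
        Finset.mem_insert, Finset.mem_singleton]
      grind
    simpa using (Finset.card_le_card hsub).trans Finset.card_le_two
  have hentry : ∀ j, cartanA l i j = (if i = j then 2 else 0) - if j ∈ neighbors then 1 else 0 := by
    intro j
    simp only [cartanA, of_apply, neighbors, Finset.mem_filter_univ]
    grind
  have hsum : (cartanA l *ᵥ 1) i = 2 - neighbors.card := by
    simp [mulVec, dotProduct, hentry]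
  rw [hsum]
  exact sub_nonneg.2 (Nat.cast_le_ofNat.2 hcard)

theorem stmt_10_general {d : ℕ} {A : Matrix (Fin d) (Fin d) ℝ} (hA : IsZMatrix A)
    {u : Fin d → ℝ} (hu : ∀ i, 0 < u i) (hAu : 0 ≤ A *ᵥ u) (b : Fin d → ℝ) :
    ∃ c ≤ b, ∀ x y, b ≤ A *ᵥ x → b ≤ A *ᵥ y → IsIntPt x → IsIntPt y →
      ZConn {z | c ≤ A *ᵥ z} x y := by
  have hcb : b - A.diag ≤ b := sub_le_self b (hA.diag_nonneg hu hAu)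
  refine ⟨b - A.diag, hcb, fun x y hx hy hxint hyint => ?_⟩
  choose v hv using hxint
  choose w hw using hyint
  obtain rfl : x = Int.cast ∘ v := funext hv
  obtain rfl : y = Int.cast ∘ w := funext hw
  have hreach := hA.reachable_induce_hasse_intCone hu hAu
    (v := ⟨v, hcb.trans hx⟩) (w := ⟨w, hcb.trans hy⟩) hx hy
  exact zConn_of_reachable_induce_hasse (s := intCone A (b - A.diag)) (fun _ hz => hz) hreach

/-- For every `b ∈ ℝ^{l−1}`, the set `A(b)` is nonempty. -/
theorem stmt_10 (l : ℕ) (hl : 2 ≤ l) (b : Fin (l - 1) → ℝ) :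
    (calA l b).Nonempty :=
  stmt_10_general (isZMatrix_cartanA l) (fun _ => one_pos) (cartanA_mulVec_one_nonneg l) b
end

section
/- The sequence (m_M)_{M ∈ ℕ} is increasing, and for every M ∈ ℕ one has m_{nlM} = lM + m_0. -/
/-- The vector `b(M; n, l, r)` with entries `b_i^{(M)} = (M + r_{i+1} − r_i)/n`. -/
noncomputable def bvec (n l : ℕ) (r : Fin l → ℤ) (M : ℤ) : Fin (l - 1) → ℝ := fun i =>
  ((M : ℝ) + (r ⟨i.val + 1, by have := i.isLt; omega⟩ : ℝ) -
    (r ⟨i.val, by have := i.isLt; omega⟩ : ℝ)) / (n : ℝ)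

/-- The set of values `min_{1 ≤ i ≤ l−1} c_i`, where `c` ranges over the integer
points of `A(b)`. -/
def minSet (l : ℕ) (hl : 2 ≤ l) (b : Fin (l - 1) → ℝ) : Set ℤ :=
  {v | ∃ c : Fin (l - 1) → ℤ, (fun i => (c i : ℝ)) ∈ calA l b ∧
        v = Finset.univ.inf' ⟨⟨0, by omega⟩, Finset.mem_univ _⟩ c}

/-!
Both assertions come from how `A(b)` depends on `b`. Enlarging `b` shrinks `C_b`, hence relaxes the
condition defining `A(b)`; since `b(M)` grows with `M`, so does `m_M`.

For the periodicity, translation by an integer vector `v` preserves integer points and unit steps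
and carries `C_b` onto `C_{b + A·v}`, so it identifies `A(b)` with `A(b + A·v) - A·v`. The Weyl
vector `ρ = A⁻¹(1,…,1)` has entries `i(l-i)/2`. It need not be an integer vector, but `l·ρ` is one
whatever the parity of `l`, and translating by `k·l·ρ` realises the passage from `b(M)` to
`b(M + nlk) = b(M) + lk·(1,…,1)`.
-/

open Matrix

section Monotonicity

variable {l : ℕ}

lemma cone_antitone : Antitone (cone l) :=
  fun _ _ hb _ hx i => (hb i).trans (hx i)

lemma calA_mono : Monotone (calA l) :=
  fun _ _ hb _ hc => ⟨fun i => (hc.1 i).trans (hb i), fun x y hx hy =>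
    hc.2 x y (cone_antitone hb hx) (cone_antitone hb hy)⟩

lemma minSet_mono (hl : 2 ≤ l) : Monotone (minSet l hl) :=
  fun _ _ hb _ ⟨c, hc, hv⟩ => ⟨c, calA_mono hb hc, hv⟩

end Monotonicity

section Translation

namespace IsIntPt

variable {d : ℕ} {x y : Fin d → ℝ}

lemma add (hx : IsIntPt x) (hy : IsIntPt y) : IsIntPt (x + y) := fun i => by
  obtain ⟨a, ha⟩ := hx i
  obtain ⟨b, hb⟩ := hy i
  exact ⟨a + b, by simp [ha, hb]⟩

lemma intCast_smul (k : ℤ) (hx : IsIntPt x) : IsIntPt ((k : ℝ) • x) := fun i => by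
  obtain ⟨a, ha⟩ := hx i
  exact ⟨k * a, by simp [ha]⟩

lemma neg (hx : IsIntPt x) : IsIntPt (-x) := by
  simpa using hx.intCast_smul (-1)

lemma sub (hx : IsIntPt x) (hy : IsIntPt y) : IsIntPt (x - y) := by
  simpa only [sub_eq_add_neg] using hx.add hy.neg

end IsIntPt

lemma ZConn.add_right {d : ℕ} {D D' : Set (Fin d → ℝ)} {x y v : Fin d → ℝ} (hv : IsIntPt v)
    (hD : Set.MapsTo (· + v) D D') (h : ZConn D x y) : ZConn D' (x + v) (y + v) := by
  obtain ⟨N, p, h0, hN, hp, hstep⟩ := h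
  refine ⟨N, fun k => p k + v, by simp only [h0], by simp only [hN],
    fun k hk => ⟨hD (hp k hk).1, (hp k hk).2.add hv⟩, fun k hk => ?_⟩
  obtain ⟨j, hj | hj⟩ := hstep k hk
  · exact ⟨j, .inl (by funext i; simp only [hj, Pi.add_apply]; ring)⟩
  · exact ⟨j, .inr (by funext i; simp only [hj, Pi.add_apply]; ring)⟩

variable {l : ℕ} {b c v : Fin (l - 1) → ℝ}

lemma add_mem_cone_add_mulVec_iff {x : Fin (l - 1) → ℝ} :
    x + v ∈ cone l (b + cartanA l *ᵥ v) ↔ x ∈ cone l b := by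
  simp [cone, mulVec_add]

lemma add_mulVec_mem_calA (hv : IsIntPt v) (hc : c ∈ calA l b) :
    c + cartanA l *ᵥ v ∈ calA l (b + cartanA l *ᵥ v) := by
  refine ⟨fun i => add_le_add_left (hc.1 i) _, fun x y hx hy hxint hyint => ?_⟩
  rw [← sub_add_cancel x v, add_mem_cone_add_mulVec_iff] at hx
  rw [← sub_add_cancel y v, add_mem_cone_add_mulVec_iff] at hy
  have hconn : ZConn (cone l c) (x - v) (y - v) :=
    hc.2 _ _ hx hy (hxint.sub hv) (hyint.sub hv)
  simpa only [sub_add_cancel] using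
    hconn.add_right hv fun _ hz => add_mem_cone_add_mulVec_iff.2 hz

lemma add_mulVec_mem_calA_iff (hv : IsIntPt v) :
    c + cartanA l *ᵥ v ∈ calA l (b + cartanA l *ᵥ v) ↔ c ∈ calA l b := by
  refine ⟨fun hc => ?_, add_mulVec_mem_calA hv⟩
  simpa [mulVec_neg] using add_mulVec_mem_calA hv.neg hc

lemma add_mem_minSet_add_const_iff (hl : 2 ≤ l) {t : ℤ} (hv : IsIntPt v)
    (hvt : cartanA l *ᵥ v = fun _ => (t : ℝ)) {a : ℤ} :
    a + t ∈ minSet l hl (b + fun _ => (t : ℝ)) ↔ a ∈ minSet l hl b := by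
  refine ((Equiv.addRight fun _ => t).exists_congr fun c => and_congr ?_ ?_).symm
  · rw [← add_mulVec_mem_calA_iff hv, hvt]
    congr! 1
    ext i
    simp
  · have hne : (Finset.univ : Finset (Fin (l - 1))).Nonempty := ⟨⟨0, by omega⟩, Finset.mem_univ _⟩
    have hmin : Finset.univ.inf' hne (fun i => c i + t) = Finset.univ.inf' hne c + t :=
      (map_finset_inf' (OrderIso.addRight t) hne c).symm
    exact (add_left_inj t).symm.trans (hmin ▸ Iff.rfl)

end Translation

section WeylVector

variable (l : ℕ)

/-- The Weyl vector `ρ` of `sl_l` (half the sum of the positive roots) in the basis of simple roots,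
that is `A⁻¹(1,…,1)`. Its `i`-th entry is `i(l-i)/2` for the 1-based index `i`, whence the shift
by one from `Fin (l - 1)`. -/
noncomputable def weylVector : Fin (l - 1) → ℝ :=
  fun i => (i + 1) * (l - (i + 1)) / 2

variable {l} in
/-- The boundary conditions account for the missing neighbours of the two end nodes. -/
lemma cartanA_mulVec_eq_neg_second_difference {f : ℕ → ℝ} (h0 : f 0 = 0) (hl : f l = 0)
    (i : Fin (l - 1)) :
    (cartanA l *ᵥ fun j => f (j.val + 1)) i = 2 * f (i + 1) - f i - f (i + 2) := by
  have hi := i.isLt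
  let g : ℕ → ℝ := fun k =>
    (if i + 1 = k then 2 * f k else 0) - (if i = k then f k else 0) - (if i + 2 = k then f k else 0)
  have hg0 : g 0 = 0 := by simp [g, h0]
  have hgl : g l = 0 := by simp [g, hl]
  calc (cartanA l *ᵥ fun j => f (j.val + 1)) i
      = ∑ j : Fin (l - 1), g (j + 1) := by
        simp only [mulVec, dotProduct]
        refine Finset.sum_congr rfl fun j _ => ?_
        simp only [cartanA, of_apply, Fin.ext_iff, g]
        split_ifs <;> first | omega | ring
    _ = ∑ k ∈ Finset.range (l + 1), g k := by
        rw [Fin.sum_univ_eq_sum_range fun k => g (k + 1), Finset.sum_range_succ, hgl, add_zero]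
        obtain ⟨d, rfl⟩ : ∃ d, l = d + 1 := ⟨l - 1, by omega⟩
        rw [Finset.sum_range_succ', hg0, add_zero, Nat.add_sub_cancel]
    _ = 2 * f (i + 1) - f i - f (i + 2) := by
        simp only [g, Finset.sum_sub_distrib, Finset.sum_ite_eq, Finset.mem_range]
        rw [if_pos (by omega), if_pos (by omega), if_pos (by omega)]

lemma cartanA_mulVec_weylVector : cartanA l *ᵥ weylVector l = 1 := by
  funext i
  let f : ℕ → ℝ := fun k => k * (l - k) / 2
  have hf : weylVector l = fun j : Fin (l - 1) => f (j + 1) := by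
    funext j
    simp [weylVector, f]
  rw [hf, cartanA_mulVec_eq_neg_second_difference (by simp [f]) (by simp [f])]
  simp only [f, Pi.one_apply]
  push_cast
  ring

lemma even_mul_mul_sub (a b : ℤ) : Even (a * (b * (a - b))) := by
  simp only [Int.even_mul, Int.even_sub]
  tauto

lemma isIntPt_natCast_smul_weylVector : IsIntPt ((l : ℝ) • weylVector l) := fun i => by
  obtain ⟨q, hq⟩ := even_mul_mul_sub l (i + 1)
  have hq' : (l : ℝ) * ((i + 1) * (l - (i + 1))) = q + q := mod_cast hq
  refine ⟨q, ?_⟩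
  simp only [Pi.smul_apply, smul_eq_mul, weylVector]
  linear_combination hq' / 2

variable {l}

lemma isGreatest_minSet_add_mul (hl : 2 ≤ l) {b : Fin (l - 1) → ℝ} {a : ℤ} (k : ℤ)
    (ha : IsGreatest (minSet l hl b) a) :
    IsGreatest (minSet l hl (b + fun _ => ((l * k : ℤ) : ℝ))) (a + l * k) := by
  let v := (k : ℝ) • (l : ℝ) • weylVector l
  have hv : IsIntPt v := (isIntPt_natCast_smul_weylVector l).intCast_smul k
  have hvt : cartanA l *ᵥ v = fun _ => ((l * k : ℤ) : ℝ) := by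
    funext i
    simp [v, mulVec_smul, cartanA_mulVec_weylVector, mul_comm]
  refine ⟨(add_mem_minSet_add_const_iff hl hv hvt).2 ha.1, fun x hx => ?_⟩
  rw [← sub_add_cancel x (l * k), add_mem_minSet_add_const_iff hl hv hvt] at hx
  exact sub_le_iff_le_add.1 (ha.2 hx)

end WeylVector

section Offsets

variable (n l : ℕ) (r : Fin l → ℤ)

lemma bvec_mono : Monotone (bvec n l r) := fun M M' hM i => by
  have : (M : ℝ) ≤ M' := mod_cast hM
  simp only [bvec]
  gcongr

variable {n} in
lemma bvec_add_mul (hn : n ≠ 0) (M t : ℤ) :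
    bvec n l r (M + n * t) = bvec n l r M + fun _ => (t : ℝ) := by
  funext i
  simp only [bvec, Pi.add_apply]
  push_cast
  field_simp
  ring

end Offsets

theorem stmt_14_general (n l : ℕ) (hn : n ≠ 0) (hl : 2 ≤ l) (r : Fin l → ℤ) (m : ℕ → ℤ)
    (hm : ∀ M : ℕ, IsGreatest (minSet l hl (bvec n l r (M : ℤ))) (m M)) :
    Monotone m ∧ ∀ M k : ℕ, m (M + n * l * k) = (l : ℤ) * (k : ℤ) + m M := by
  refine ⟨fun M M' hM => ?_, fun M k => ?_⟩
  · exact (hm M).mono (hm M') (minSet_mono hl (bvec_mono n l r (mod_cast hM)))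
  · have hb : bvec n l r ((M + n * l * k : ℕ) : ℤ)
        = bvec n l r M + fun _ => ((l * k : ℤ) : ℝ) := by
      rw [← bvec_add_mul l r hn]
      push_cast
      rw [mul_assoc]
    have hmax := hm (M + n * l * k)
    rw [hb] at hmax
    rw [hmax.unique (isGreatest_minSet_add_mul hl k (hm M)), add_comm]

/-- If `m M` is, for each `M ∈ ℕ`, the maximum over integer points `c` of `A(b(M))` of
the minimal entry of `c`, then the sequence `(m_M)` is increasing and
`m_{nlM} = lM + m_0` for every `M ∈ ℕ`. -/
theorem stmt_14 (n l : ℕ) (hn : 2 ≤ n) (hl : 2 ≤ l) (s : ℤ)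
    (r : Fin l → ℤ)
    (hr : (∑ i, r i = s) ∧ (∀ i j : Fin l, i ≤ j → r j ≤ r i) ∧
          r ⟨0, by omega⟩ - r ⟨l - 1, by omega⟩ ≤ (n : ℤ))
    (m : ℕ → ℤ)
    (hm : ∀ M : ℕ, IsGreatest (minSet l hl (bvec n l r (M : ℤ))) (m M)) :
    Monotone m ∧ ∀ M : ℕ, m (n * l * M) = (l : ℤ) * (M : ℤ) + m 0 := by
  obtain ⟨hmono, hperiod⟩ := stmt_14_general n l (by omega) hl r m hm
  exact ⟨hmono, fun M => by simpa using hperiod 0 M⟩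
end
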